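/- Let ψ : S² → S² be a branched covering of degree d ≥ 2 with only simple branch points whose images are pairwise distinct, and suppose some embedded circle C ⊂ S² (target) through exactly two branch values has preimage ψ⁻¹(C) that does not separate S² (domain). Then the monodromy of ψ around each point of C ∩ {branch values} is trivial, contradicting that these are branch values; hence ψ⁻¹(C) separates S² whenever C passes through branch values with nontrivial monodromy. -/

import Mathlib

noncomputable section
open Metric Set

abbrev E3 := EuclideanSpace ℝ (Fin 3)
/-- The round 2-sphere, as the unit sphere of `ℝ³`. -/
abbrev S2 := Metric.sphere (0 : E3) 1

/-- A proper `d`-sheeted branched covering with simple branch points. -/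
structure SimpleBranchedCover (X Y : Type*) [TopologicalSpace X]
    [TopologicalSpace Y] (d : ℕ) where
  toFun : X → Y
  continuous_toFun : Continuous toFun
  proper : IsProperMap toFun
  branchPoints : Set X
  finite_branchPoints : branchPoints.Finite
  isCovering : IsCoveringMap
    (fun x : (toFun ⁻¹' ((toFun '' branchPoints)ᶜ) : Set X) =>
      (⟨toFun x.1, x.2⟩ : ((toFun '' branchPoints)ᶜ : Set Y)))
  degree_eq : ∀ y : Y, y ∉ toFun '' branchPoints → Nat.card (toFun ⁻¹' {y}) = d
  simple_branch : ∀ x ∈ branchPoints, ∃ U ∈ nhds x,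
    ∀ᶠ y in nhds (toFun x), y ≠ toFun x →
      Nat.card {z : X | z ∈ U ∧ toFun z = y} = 2

open Topology unitInterval

/-- Homotopy lifting for the complex exponential: if the start of a homotopy of nowhere vanishing
functions has a continuous logarithm, so does its end. -/
lemma exists_log_of_homotopy {A : Type*} [TopologicalSpace A] (H : I × A → ℂ)
    (hH : Continuous H) (hne : ∀ x, H x ≠ 0) (L₀ : A → ℂ) (hL₀ : Continuous L₀)
    (h₀ : ∀ a, Complex.exp (L₀ a) = H (0, a)) :
    ∃ L : A → ℂ, Continuous L ∧ ∀ a, Complex.exp (L a) = H (1, a) := by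
  let H' : C(I × A, {z : ℂ // z ≠ 0}) := ⟨fun x ↦ ⟨H x, hne x⟩, by fun_prop⟩
  have h0' : ∀ a, H' (0, a) = ⟨_, ((⟨L₀, hL₀⟩ : C(A, ℂ)) a).exp_ne_zero⟩ :=
    fun a ↦ Subtype.ext (h₀ a).symm
  refine ⟨fun a ↦ Complex.isCoveringMap_exp.liftHomotopy H' ⟨L₀, hL₀⟩ h0' (1, a),
    by fun_prop, fun a ↦ ?_⟩
  exact congrArg Subtype.val
    (congrFun (Complex.isCoveringMap_exp.liftHomotopy_lifts H' ⟨L₀, hL₀⟩ h0') (1, a))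

/-- Continuous logarithms on two open sets with preconnected intersection glue. -/
lemma exists_log_union {X : Type*} [TopologicalSpace X] {U V : Set X} (hU : IsOpen U)
    (hV : IsOpen V) (hUV : IsPreconnected (U ∩ V)) {f L₁ L₂ : X → ℂ}
    (hL₁ : ContinuousOn L₁ U) (hL₂ : ContinuousOn L₂ V)
    (h₁ : ∀ x ∈ U, Complex.exp (L₁ x) = f x) (h₂ : ∀ x ∈ V, Complex.exp (L₂ x) = f x) :
    ∃ L : X → ℂ, ContinuousOn L (U ∪ V) ∧ ∀ x ∈ U ∪ V, Complex.exp (L x) = f x := by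
  classical
  obtain ⟨c, hc, hcL⟩ : ∃ c : ℂ, Complex.exp c = 1 ∧ ∀ x ∈ U ∩ V, L₁ x = L₂ x + c := by
    rcases (U ∩ V).eq_empty_or_nonempty with he | ⟨x₀, hx₀⟩
    · exact ⟨0, by simp, by simp [he]⟩
    have hexp : ∀ x ∈ U ∩ V, Complex.exp (L₁ x - L₂ x) = 1 := fun x hx ↦ by
      rw [Complex.exp_sub, h₁ x hx.1, ← h₂ x hx.2, div_self (Complex.exp_ne_zero _)]
    refine ⟨L₁ x₀ - L₂ x₀, hexp x₀ hx₀, fun x hx ↦ ?_⟩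
    let g : X → ℝ := fun x ↦ (L₁ x - L₂ x).im / (2 * Real.pi)
    have hg : ∀ x ∈ U ∩ V, ∃ n : ℤ, L₁ x - L₂ x = n * (2 * Real.pi * Complex.I) ∧ g x = n := by
      intro x hx
      obtain ⟨n, hn⟩ := Complex.exp_eq_one_iff.1 (hexp x hx)
      refine ⟨n, hn, ?_⟩
      have := Real.pi_ne_zero
      simp only [g, hn]
      simp
    have hgc : ContinuousOn g (U ∩ V) :=
      (Complex.continuous_im.comp_continuousOn
        ((hL₁.mono inter_subset_left).sub (hL₂.mono inter_subset_right))).div_const _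
    have hdisc : IsDiscrete (range ((↑) : ℤ → ℝ)) :=
      ⟨(Int.isClosedEmbedding_coe_real.isEmbedding.toHomeomorph).symm.isEmbedding.discreteTopology⟩
    have hconst : g x = g x₀ := hUV.constant_of_mapsTo hdisc hgc
      (fun y hy ↦ by obtain ⟨n, -, hn⟩ := hg y hy; exact ⟨n, hn.symm⟩) hx hx₀
    obtain ⟨n, hn, hn'⟩ := hg x hx
    obtain ⟨m, hm, hm'⟩ := hg x₀ hx₀
    have hnm : n = m := by exact_mod_cast (hn'.symm.trans hconst).trans hm'
    rw [hm, ← hnm, ← hn]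
    ring
  have hEqV : ∀ x ∈ V, (if x ∈ U then L₁ x else L₂ x + c) = L₂ x + c := fun x hx ↦ by
    split_ifs with hxU
    · exact hcL x ⟨hxU, hx⟩
    · rfl
  refine ⟨fun x ↦ if x ∈ U then L₁ x else L₂ x + c, ?_, ?_⟩
  · refine ContinuousOn.union_of_isOpen (hL₁.congr fun x hx ↦ if_pos hx)
      ((hL₂.add continuousOn_const).congr hEqV) hU hV
  · rintro x (hx | hx)
    · simpa [hx] using h₁ x hx
    · simp only [hEqV x hx, Complex.exp_add, hc, mul_one, h₂ x hx]

/-- A complex coordinate on the sphere with zero at `p` and pole at `q`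
(with junk value `0` at `q`). -/
lemma exists_coordinate {p q : S2} (hpq : p ≠ q) :
    ∃ (f : S2 → ℂ) (e : ℂ → S2), Continuous e ∧ (∀ z, e z ≠ q) ∧ (∀ z, f (e z) = z) ∧
      (∀ x, x ≠ q → e (f x) = x) ∧ f p = 0 ∧ f q = 0 ∧ ContinuousOn f {q}ᶜ ∧
      ContinuousOn (fun x ↦ (f x)⁻¹) {p}ᶜ := by
  classical
  have : Fact (Module.finrank ℝ E3 = 2 + 1) := ⟨by simp⟩
  let s := stereographic' 2 q
  let i := Complex.orthonormalBasisOneI.repr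
  let φ : S2 → ℂ := fun x ↦ i.symm (s x)
  have hs : s.source = {q}ᶜ := stereographic'_source q
  have ht : s.target = univ := stereographic'_target q
  have hφ : ContinuousOn φ {q}ᶜ := i.symm.continuous.comp_continuousOn (hs ▸ s.continuousOn)
  let f : S2 → ℂ := fun x ↦ if x = q then 0 else φ x - φ p
  let e : ℂ → S2 := fun z ↦ s.symm (i (z + φ p))
  have hfc : ContinuousOn f {q}ᶜ :=
    (hφ.sub continuousOn_const).congr fun x hx ↦ if_neg hx
  have hec : Continuous e := by
    have : Continuous s.symm := by
      rw [← continuousOn_univ, ← ht]; exact s.continuousOn_symm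
    exact this.comp (i.continuous.comp (by fun_prop))
  have heq : ∀ z, e z ≠ q := fun z ↦ by
    have : e z ∈ s.source := s.map_target (by rw [ht]; trivial)
    rwa [hs] at this
  have hfe : ∀ z, f (e z) = z := fun z ↦ by
    have : s (e z) = i (z + φ p) := s.right_inv (by rw [ht]; trivial)
    simp [f, heq z, φ, this]
  have hef : ∀ x, x ≠ q → e (f x) = x := fun x hx ↦ by
    have : s.symm (s x) = x := s.left_inv (by rw [hs]; exact hx)
    simp [f, hx, e, φ, this]
  have hfp : f p = 0 := by simp [f]
  have hfq : f q = 0 := by simp [f]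
  refine ⟨f, e, hec, heq, hfe, hef, hfp, hfq, hfc, fun x hx ↦ ContinuousAt.continuousWithinAt ?_⟩
  by_cases hxq : x = q
  · subst hxq
    rw [ContinuousAt, hfq, inv_zero, Metric.tendsto_nhds]
    intro ε hε
    have hK : IsClosed (e '' Metric.closedBall 0 ε⁻¹) :=
      ((isCompact_closedBall _ _).image hec).isClosed
    have hx : x ∈ (e '' Metric.closedBall 0 ε⁻¹)ᶜ := by
      rintro ⟨z, -, hz⟩
      exact heq z hz
    filter_upwards [hK.isOpen_compl.mem_nhds hx] with y hy
    by_cases hyx : y = x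
    · simpa [hyx, hfq] using hε
    · have : ε⁻¹ < ‖f y‖ := by
        by_contra! h
        exact hy ⟨f y, by simpa using h, hef y hyx⟩
      rw [dist_zero_right, norm_inv]
      exact inv_lt_of_inv_lt₀ hε this
  · refine (hfc.continuousAt (isOpen_compl_singleton.mem_nhds hxq)).inv₀ fun h0 ↦ hx ?_
    rw [mem_singleton_iff, ← hef x hxq, h0, ← hfp, hef p hpq]

/-- A coordinate with zero `p` and pole `q` has a continuous logarithm off any arc
from `p` to `q`. -/
lemma exists_log_compl_arc {X : Type*} [TopologicalSpace X] {p q : X} {f : X → ℂ}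
    (hinj : InjOn f {q}ᶜ) (hfp : f p = 0) (hfq : f q = 0)
    (hfc : ContinuousOn f {q}ᶜ) (hfi : ContinuousOn (fun x ↦ (f x)⁻¹) {p}ᶜ)
    {γ : ℝ → X} (hγ : Continuous γ) (hγi : InjOn γ (Icc 0 1)) (hγ0 : γ 0 = p) (hγ1 : γ 1 = q) :
    ∃ L : X → ℂ, ContinuousOn L (γ '' Icc 0 1)ᶜ ∧
      ∀ x ∈ (γ '' Icc 0 1)ᶜ, Complex.exp (L x) = f x := by
  let A : Set X := (γ '' Icc 0 1)ᶜ
  have hneq : ∀ t ∈ Icc (0 : ℝ) 1, t ≠ 1 → γ t ≠ q := fun t ht h1 h ↦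
    h1 (hγi ht (by simp) (h.trans hγ1.symm))
  have hnep : ∀ t ∈ Icc (0 : ℝ) 1, t ≠ 0 → γ t ≠ p := fun t ht h1 h ↦
    h1 (hγi ht (by simp) (h.trans hγ0.symm))
  have hpq : p ≠ q := hγ0 ▸ hneq 0 (by simp) (by simp)
  have hAq : ∀ a : A, (a : X) ≠ q := fun a h ↦ a.2 ⟨1, by simp, hγ1.trans h.symm⟩
  have hfA : Continuous fun a : A ↦ f a :=
    hfc.comp_continuous continuous_subtype_val hAq
  have hAγ : ∀ (a : A), ∀ t ∈ Icc (0 : ℝ) 1, t ≠ 1 → f a ≠ f (γ t) := fun a t ht h1 h ↦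
    a.2 ⟨t, ht, (hinj (hAq a) (hneq t ht h1) h).symm⟩
  set c := f (γ (1 / 2)) with hc
  have hhalf : (1 / 2 : ℝ) ∈ Icc (0 : ℝ) 1 := by constructor <;> norm_num
  have hc0 : c ≠ 0 := fun h ↦ hnep _ hhalf (by norm_num)
    (hinj (hneq _ hhalf (by norm_num)) hpq (h.trans hfp.symm))
  obtain ⟨L₁, hL₁, hL₁'⟩ := exists_log_of_homotopy
    (fun x : I × A ↦ 1 - f x.2 * (f (γ (1 - x.1 / 2)))⁻¹)
    (continuous_const.sub ((hfA.comp continuous_snd).mul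
      (hfi.comp_continuous (f := fun x : I × A ↦ γ (1 - x.1 / 2)) (by fun_prop) fun x ↦
        hnep _ ⟨by linarith [x.1.2.2], by linarith [x.1.2.1]⟩ (by linarith [x.1.2.2]))))
    (by
      rintro ⟨t, a⟩ h
      have h' : f a * (f (γ (1 - t / 2)))⁻¹ = 1 := (sub_eq_zero.1 h).symm
      have hne : f (γ (1 - t / 2)) ≠ 0 := fun h0 ↦ by simp [h0] at h'
      refine hAγ a (1 - t / 2) ⟨by linarith [t.2.2], by linarith [t.2.1]⟩ (fun h1 ↦ ?_) ?_
      · exact hne (by rw [h1, hγ1, hfq])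
      · rwa [← div_eq_mul_inv, div_eq_one_iff_eq hne] at h')
    (fun _ ↦ 0) continuous_const (fun a ↦ by simp [hγ1, hfq])
  obtain ⟨L₂, hL₂, hL₂'⟩ := exists_log_of_homotopy
    (fun x : I × A ↦ f x.2 - f (γ ((1 - x.1) / 2)))
    ((hfA.comp continuous_snd).sub
      (hfc.comp_continuous (f := fun x : I × A ↦ γ ((1 - x.1) / 2)) (by fun_prop) fun x ↦
        hneq _ ⟨by linarith [x.1.2.2], by linarith [x.1.2.1]⟩ (by linarith [x.1.2.1])))
    (fun ⟨t, a⟩ ↦ sub_ne_zero.2 (hAγ a _ ⟨by linarith [t.2.2], by linarith [t.2.1]⟩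
      (by linarith [t.2.1])))
    (fun a ↦ L₁ a + Complex.log (-c)) (by fun_prop) (fun a ↦ by
      rw [Complex.exp_add, hL₁', Complex.exp_log (neg_ne_zero.2 hc0)]
      have : (1 : ℝ) - 1 / 2 = 1 / 2 := by norm_num
      simp only [Icc.coe_one, Icc.coe_zero, this, sub_zero, ← hc]
      field_simp
      ring)
  refine ⟨Function.extend Subtype.val L₂ 0, ?_, fun x hx ↦ ?_⟩
  · rw [continuousOn_iff_continuous_domRestrict]
    convert! hL₂ using 1
    ext a
    exact Subtype.val_injective.extend_apply _ _ _
  · have := hL₂' ⟨x, hx⟩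
    rw [show Function.extend Subtype.val L₂ 0 x = L₂ ⟨x, hx⟩ from
      Subtype.val_injective.extend_apply L₂ 0 ⟨x, hx⟩, this]
    simp [hγ0, hfp]

/-- The identity of the punctured plane has no continuous logarithm. -/
lemma not_exists_log_id (L : ℂ → ℂ) (hL : ContinuousOn L {0}ᶜ)
    (h : ∀ z ≠ 0, Complex.exp (L z) = z) : False := by
  have hc : Continuous fun w : ℂ ↦ L (Complex.exp w) :=
    hL.comp_continuous Complex.continuous_exp fun w ↦ Complex.exp_ne_zero w
  have key : (fun w : ℂ ↦ L (Complex.exp w)) = fun w ↦ w + L 1 :=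
    Complex.isCoveringMap_exp.eq_of_comp_eq hc (by fun_prop)
      (by
        ext w
        simp [h _ (Complex.exp_ne_zero w), Complex.exp_add, h 1 one_ne_zero]) 0 (by simp)
  have h2 := congrFun key (2 * Real.pi * Complex.I)
  simp [Real.pi_ne_zero] at h2

/-- The separation half of the Jordan curve theorem on the sphere. -/
theorem not_isPreconnected_compl_range_circle {h : Circle → S2} (hc : Continuous h)
    (hi : Function.Injective h) : ¬ IsPreconnected (range h)ᶜ := by
  intro hpre
  have hπ := Real.pi_pos
  let γ₁ : ℝ → S2 := fun t ↦ h (Circle.exp (Real.pi * t))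
  let γ₂ : ℝ → S2 := fun t ↦ h (Circle.exp (-(Real.pi * t)))
  have hγ₁ : Continuous γ₁ := by fun_prop
  have hγ₂ : Continuous γ₂ := by fun_prop
  have hexp : ∀ s t : ℝ, Circle.exp s = Circle.exp t ↔ ∃ n : ℤ, s = t + n * (2 * Real.pi) :=
    fun s t ↦ Circle.exp_eq_exp
  have hinj : ∀ s ∈ Icc (0 : ℝ) 1, ∀ t ∈ Icc (0 : ℝ) 1,
      Circle.exp (Real.pi * s) = Circle.exp (Real.pi * t) → s = t := by
    intro s hs t ht hst
    obtain ⟨n, hn⟩ := (hexp _ _).1 hst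
    have hn' : s = t + n * 2 := mul_left_cancel₀ hπ.ne' (by linarith)
    have h1 : (n : ℝ) < 1 := by linarith [hs.2, ht.1]
    have h2 : (-1 : ℝ) < n := by linarith [hs.1, ht.2]
    have h3 : n = 0 := by
      have h1' : n < 1 := by exact_mod_cast h1
      have h2' : -1 < n := by exact_mod_cast h2
      omega
    simpa [h3] using hn'
  have hinj₁ : InjOn γ₁ (Icc 0 1) := fun s hs t ht hst ↦ hinj s hs t ht (hi hst)
  have hinj₂ : InjOn γ₂ (Icc 0 1) := fun s hs t ht hst ↦ hinj s hs t ht <| by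
    have := hi hst
    simpa [Circle.exp_neg] using this
  have hunion : γ₁ '' Icc 0 1 ∪ γ₂ '' Icc 0 1 = range h := by
    apply Subset.antisymm
    · rintro _ (⟨t, -, rfl⟩ | ⟨t, -, rfl⟩) <;> exact mem_range_self _
    · rintro _ ⟨u, rfl⟩
      have h1 := Complex.neg_pi_lt_arg (u : ℂ)
      have h2 := Complex.arg_le_pi (u : ℂ)
      rcases le_total 0 (Complex.arg u) with h0 | h0
      · refine Or.inl ⟨Complex.arg u / Real.pi, ⟨by positivity, (div_le_one hπ).2 h2⟩, ?_⟩
        simp only [γ₁]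
        rw [mul_div_cancel₀ _ hπ.ne', Circle.exp_arg]
      · refine Or.inr ⟨-Complex.arg u / Real.pi, ⟨div_nonneg (by linarith) hπ.le,
          (div_le_one hπ).2 (by linarith)⟩, ?_⟩
        simp only [γ₂]
        rw [mul_div_cancel₀ _ hπ.ne', neg_neg, Circle.exp_arg]
  have hinter : ∀ x ∈ γ₁ '' Icc 0 1, x ∈ γ₂ '' Icc 0 1 → x = γ₁ 0 ∨ x = γ₁ 1 := by
    rintro _ ⟨s, hs, rfl⟩ ⟨t, ht, hst⟩
    obtain ⟨n, hn⟩ := (hexp _ _).1 (hi hst)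
    have hn' : -t = s + n * 2 := mul_left_cancel₀ hπ.ne' (by linarith)
    have h1 : n ≤ 0 := by
      have : (n : ℝ) < 1 := by linarith [hs.1, ht.1]
      have : n < 1 := by exact_mod_cast this
      omega
    have h2 : -1 ≤ n := by
      have : (-2 : ℝ) < n := by linarith [hs.2, ht.2]
      have : -2 < n := by exact_mod_cast this
      omega
    obtain rfl | rfl : n = 0 ∨ n = -1 := by omega
    · left
      rw [show s = 0 by push_cast at hn'; linarith [hs.1, ht.1]]
    · right
      rw [show s = 1 by push_cast at hn'; linarith [hs.2, ht.2]]
  have hγ0 : γ₂ 0 = γ₁ 0 := by simp [γ₁, γ₂]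
  have hγ1 : γ₂ 1 = γ₁ 1 := congrArg h ((hexp _ _).2 ⟨-1, by push_cast; ring⟩)
  have hpq : γ₁ 0 ≠ γ₁ 1 := fun h01 ↦ zero_ne_one (hinj₁ (by simp) (by simp) h01)
  obtain ⟨f, e, hec, heq, hfe, hef, hfp, hfq, hfc, hfi⟩ := exists_coordinate hpq
  have hfinj : InjOn f {γ₁ 1}ᶜ := fun x hx y hy hxy ↦ by rw [← hef x hx, hxy, hef y hy]
  obtain ⟨L₁, hL₁, hL₁'⟩ := exists_log_compl_arc hfinj hfp hfq hfc hfi hγ₁ hinj₁ rfl rfl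
  obtain ⟨L₂, hL₂, hL₂'⟩ := exists_log_compl_arc hfinj hfp hfq hfc hfi hγ₂ hinj₂ hγ0 hγ1
  have hopen : ∀ γ : ℝ → S2, Continuous γ → IsOpen (γ '' Icc 0 1)ᶜ := fun γ hγ ↦
    (isCompact_Icc.image hγ).isClosed.isOpen_compl
  obtain ⟨L, hL, hL'⟩ := exists_log_union (hopen γ₁ hγ₁) (hopen γ₂ hγ₂)
    (by rwa [← compl_union, hunion]) hL₁ hL₂ hL₁' hL₂'
  have hmem : ∀ z : ℂ, z ≠ 0 → e z ∈ (γ₁ '' Icc 0 1)ᶜ ∪ (γ₂ '' Icc 0 1)ᶜ := by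
    intro z hz
    rw [← compl_inter]
    rintro ⟨hz₁, hz₂⟩
    rcases hinter _ hz₁ hz₂ with h0 | h1
    · exact hz (by rw [← hfe z, h0, hfp])
    · exact heq z h1
  exact not_exists_log_id (L ∘ e) (hL.comp hec.continuousOn hmem)
    fun z hz ↦ (hL' _ (hmem z hz)).trans (hfe z)

/-- A branched cover of positive degree is surjective. -/
lemma SimpleBranchedCover.surjective {X Y : Type*} [TopologicalSpace X] [TopologicalSpace Y]
    {d : ℕ} (ψ : SimpleBranchedCover X Y d) (hd : d ≠ 0) : Function.Surjective ψ.toFun := by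
  intro y
  by_cases hy : y ∈ ψ.toFun '' ψ.branchPoints
  · exact image_subset_range _ _ hy
  · have hcard : Nat.card (ψ.toFun ⁻¹' {y}) ≠ 0 := by rwa [ψ.degree_eq y hy]
    obtain ⟨⟨x, hx⟩⟩ := (Nat.card_ne_zero.1 hcard).1
    exact ⟨x, hx⟩

/-- Monodromy/separation.  Let `ψ : S² → S²` be a branched
covering of degree `d ≥ 2` with simple branch points whose images are pairwise
distinct.  If `C` is an embedded circle in the target passing through exactly
two branch values, then `ψ⁻¹(C)` separates the domain sphere: its complement
is disconnected.  (If `ψ⁻¹(C)` did not separate, the monodromy around each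
branch value on `C` would be trivial, contradicting that it is a branch
value.) -/
theorem preimage_of_circle_separates (d : ℕ) (hd : 2 ≤ d)
    (ψ : SimpleBranchedCover S2 S2 d)
    (hinj : Set.InjOn ψ.toFun ψ.branchPoints)
    (C : Set S2) (hC : Nonempty (C ≃ₜ Circle))
    (hC2 : (C ∩ ψ.toFun '' ψ.branchPoints).ncard = 2) :
    ¬ IsPreconnected ((ψ.toFun ⁻¹' C)ᶜ : Set S2) := by
  intro hpre
  obtain ⟨g⟩ := hC
  refine not_isPreconnected_compl_range_circle (h := fun u ↦ (g.symm u : S2)) (by fun_prop)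
    (Subtype.val_injective.comp g.symm.injective) ?_
  have hrange : range (fun u ↦ (g.symm u : S2)) = C := by
    rw [show (fun u ↦ (g.symm u : S2)) = Subtype.val ∘ g.symm from rfl,
      g.symm.surjective.range_comp, Subtype.range_coe]
  rw [hrange, ← image_preimage_eq Cᶜ (ψ.surjective (by omega)), preimage_compl]
  exact hpre.image _ ψ.continuous_toFun.continuousOn
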